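/- Let K be the n-gon (n vertices v_0,...,v_{n-1} and n edges [v_i, v_{i+1}] with indices mod n) with weight function φ given by angle weights α_0,...,α_{n-1} ∈ ℤ: φ([v_i,v_j],[v_i]) = α_i, φ([v_i,v_j],[v_j]) = α_j for i < j. Then the n×n matrix [∂_1] of the φ-weighted boundary map has determinant 0, and for 1 ≤ k ≤ n−1, the gcd of all determinants of k×k minors of [∂_1] equals gcd({α_{i_1}···α_{i_k} : i_1 < ··· < i_k}). Consequently H_0(K,φ;ℤ) ≅ ℤ/d_1 ⊕ ··· ⊕ ℤ/d_{n-1} ⊕ ℤ where d_1···d_k = gcd({α_{i_1}···α_{i_k}}) and d_n = 0. -/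

import Mathlib

open scoped Matrix

/-!
Factor `[∂₁] = diag(α) · C`, where `C` is the boundary matrix of the unweighted cycle. Since `C` is
singular and each of its proper principal minors on a vertex set is, after rotating the cycle so
that a missing vertex comes first, triangular with diagonal `-1`, the `k × k` minors of `[∂₁]` have
the same gcd as the `k`-fold products of the weights.

The image of `C` consists of the vectors with coordinate sum zero, so `H₀ = Rⁿ / diag(α){∑ y = 0}`.
Replacing two weights `g a`, `g b` with `a`, `b` coprime by their gcd `g` and lcm `g a b` changes
neither `H₀` (up to isomorphism) nor the gcds of the `k`-fold products. Finitely many such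
replacements turn `α` into a divisibility chain `γ₀ ∣ γ₁ ∣ ⋯`, for which `γ₀ ⋯ γₖ₋₁` is, up to a
unit, the gcd of the `k`-fold products and `H₀` splits visibly.
-/

open Finset Polynomial

@[to_additive]
lemma prod_eq_prod_of_mul_eq_mul {ι M : Type*} [Fintype ι] [CommMonoid M] {f g : ι → M} {i j : ι}
    (hij : i ≠ j) (hfg : f i * f j = g i * g j) (h : ∀ k, k ≠ i → k ≠ j → f k = g k) :
    ∏ k, f k = ∏ k, g k := by
  classical
  rw [← prod_mul_prod_compl {i, j} f, ← prod_mul_prod_compl {i, j} g, prod_pair hij,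
    prod_pair hij, hfg]
  congr 1
  refine prod_congr rfl fun k hk ↦ ?_
  simp only [mem_compl, mem_insert, mem_singleton, not_or] at hk
  exact h k hk.1 hk.2

lemma val_le_val_of_strictMono {k n : ℕ} {f : Fin k → Fin n} (hf : StrictMono f) (i : Fin k) :
    (i : ℕ) ≤ f i := by
  simpa using card_le_card_of_injOn (s := Iio i) (t := Iio (f i)) f
    (fun j hj ↦ by simpa using hf (by simpa using hj)) hf.injective.injOn

section GcdOfProducts

variable {R : Type*} [CommRing R] [NormalizedGCDMonoid R]

lemma gcd_powersetCard_prod_dvd {ι : Type*} [Fintype ι] {k : ℕ} (α : ι → R) (p : Fin k ↪ ι) :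
    (powersetCard k univ).gcd (fun s ↦ ∏ i ∈ s, α i) ∣ ∏ i, α (p i) := by
  simpa only [prod_map] using gcd_dvd (f := fun s ↦ ∏ i ∈ s, α i)
    (show univ.map p ∈ powersetCard k univ by simp [mem_powersetCard])

lemma gcd_minors_diagonal_mul [IsDomain R] {ι : Type*} [Fintype ι] [DecidableEq ι] {k : ℕ}
    (α : ι → R) (B : Matrix ι ι R)
    (hB : ∀ s : Finset ι, #s = k →
      ∃ p q : Fin k ↪ ι, univ.map p = s ∧ IsUnit (B.submatrix p q).det) :
    univ.gcd (fun p : (Fin k ↪ ι) × (Fin k ↪ ι) ↦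
        ((Matrix.diagonal α * B).submatrix p.1 p.2).det) =
      (powersetCard k univ).gcd (fun s ↦ ∏ i ∈ s, α i) := by
  have hdet (p q : Fin k ↪ ι) : ((Matrix.diagonal α * B).submatrix p q).det =
      (∏ i, α (p i)) * (B.submatrix p q).det := by
    rw [← Matrix.det_diagonal, ← Matrix.det_mul]
    congr 1
    ext i j
    simp only [Matrix.submatrix_apply, Matrix.diagonal_mul]
  simp only [hdet]
  refine dvd_antisymm_of_normalize_eq normalize_gcd normalize_gcd
    (dvd_gcd fun s hs ↦ ?_) (dvd_gcd fun p _ ↦ (gcd_powersetCard_prod_dvd α p.1).mul_right _)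
  obtain ⟨p, q, rfl, hu⟩ := hB s (mem_powersetCard.1 hs).2
  rw [prod_map]
  exact hu.dvd_mul_right.1 (gcd_dvd (f := fun p : (Fin k ↪ ι) × (Fin k ↪ ι) ↦
    (∏ i, α (p.1 i)) * (B.submatrix p.1 p.2).det) (mem_univ (p, q)))

lemma span_finset_gcd [IsDomain R] [IsBezout R] {ι : Type*} (s : Finset ι) (f : ι → R) :
    Ideal.span {s.gcd f} = ∑ i ∈ s, Ideal.span {f i} := by
  classical
  induction s using Finset.induction_on with
  | empty => simp
  | insert a s ha ih => rw [gcd_insert, sum_insert ha, ← ih, span_gcd, Ideal.span_insert]; rfl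

lemma span_gcd_powersetCard_prod [IsDomain R] [IsBezout R] {ι : Type*} [Fintype ι] {k : ℕ}
    (hk : k ≤ Fintype.card ι) (α : ι → R) :
    Ideal.span {(powersetCard k univ).gcd (fun s ↦ ∏ i ∈ s, α i)} =
      (∏ i, (X + C (Ideal.span {α i}))).coeff (Fintype.card ι - k) := by
  rw [prod_X_add_C_coeff _ _ (by rw [card_univ]; exact Nat.sub_le _ _), card_univ,
    Nat.sub_sub_self hk, span_finset_gcd]
  simp only [Ideal.prod_span_singleton]

end GcdOfProducts

section DvdChain

/-- A finite sequence in which each entry divides all later ones, as do the invariant factors of a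
Smith normal form. -/
def IsDvdChain {R : Type*} [Monoid R] {n : ℕ} (γ : Fin n → R) : Prop :=
  ∀ ⦃i j⦄, i ≤ j → γ i ∣ γ j

lemma IsDvdChain.tail {R : Type*} [Monoid R] {n : ℕ} {γ : Fin (n + 1) → R} (hγ : IsDvdChain γ) :
    IsDvdChain (Fin.tail γ) :=
  fun _ _ hij ↦ hγ (Fin.succ_le_succ_iff.2 hij)

lemma IsDvdChain.cons {R : Type*} [Monoid R] {n : ℕ} {γ : Fin n → R} (hγ : IsDvdChain γ) {g : R}
    (hg : ∀ i, g ∣ γ i) : IsDvdChain (Fin.cons g γ : Fin (n + 1) → R) := by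
  intro i j hij
  cases i using Fin.cases with
  | zero => cases j using Fin.cases with
    | zero => exact dvd_rfl
    | succ j => exact hg j
  | succ i => cases j using Fin.cases with
    | zero => exact absurd hij (Fin.succ_pos i).not_ge
    | succ j => exact hγ (Fin.succ_le_succ_iff.1 hij)

lemma IsDvdChain.gcd_powersetCard_prod {R : Type*} [CommRing R] [IsDomain R]
    [NormalizedGCDMonoid R] {n k : ℕ} {γ : Fin n → R} (hγ : IsDvdChain γ) (hk : k ≤ n) :
    (powersetCard k univ).gcd (fun s ↦ ∏ i ∈ s, γ i) =
      normalize (∏ i : Fin k, γ (i.castLE hk)) := by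
  refine dvd_antisymm_of_normalize_eq normalize_gcd (normalize_idem _)
    (dvd_normalize_iff.2 (gcd_powersetCard_prod_dvd γ (Fin.castLEEmb hk)))
    (normalize_dvd_iff.2 (dvd_gcd fun s hs ↦ ?_))
  have hs : #s = k := (mem_powersetCard.1 hs).2
  rw [← map_orderEmbOfFin_univ s hs, prod_map]
  exact prod_dvd_prod_of_dvd _ _ fun i _ ↦
    hγ (Fin.le_def.2 (val_le_val_of_strictMono (s.orderEmbOfFin hs).strictMono i))

end DvdChain

section WeightedBoundaries

variable {R ι : Type*} [CommRing R] [Fintype ι]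

variable (R ι) in
/-- The vectors with coordinate sum zero: the `0`-boundaries of a connected graph with vertex set
`ι` and trivial weights. -/
def sumZero : Submodule R (ι → R) :=
  LinearMap.ker (∑ i, LinearMap.proj i)

lemma mem_sumZero {x : ι → R} : x ∈ sumZero R ι ↔ ∑ i, x i = 0 := by
  simp [sumZero]

/-- The `0`-boundaries of a connected graph with vertex set `ι` and angle weights `α`; the quotient
by this submodule is the weighted homology `H₀`. -/
def weightedBoundaries (α : ι → R) : Submodule R (ι → R) :=
  (sumZero R ι).map (LinearMap.mulLeft R α)

lemma mem_weightedBoundaries {α z : ι → R} :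
    z ∈ weightedBoundaries α ↔ ∃ y : ι → R, ∑ i, y i = 0 ∧ α * y = z := by
  simp [weightedBoundaries, mem_sumZero]

lemma map_weightedBoundaries {α β : ι → R} (U V : (ι → R) ≃ₗ[R] (ι → R))
    (hUV : ∀ x, U (α * x) = β * V x) (hV : ∀ x, ∑ i, V x i = ∑ i, x i) :
    (weightedBoundaries α).map (U : (ι → R) →ₗ[R] (ι → R)) = weightedBoundaries β := by
  ext z
  simp only [Submodule.mem_map, mem_weightedBoundaries]
  constructor
  · rintro ⟨_, ⟨y, hy, rfl⟩, rfl⟩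
    exact ⟨V y, (hV y).trans hy, (hUV y).symm⟩
  · rintro ⟨y, hy, rfl⟩
    refine ⟨α * V.symm y, ⟨V.symm y, ?_, rfl⟩, ?_⟩
    · rw [← hV, V.apply_symm_apply, hy]
    · exact (hUV _).trans (by rw [V.apply_symm_apply])

end WeightedBoundaries

section PlaneMap

variable {R ι : Type*} [CommRing R] [DecidableEq ι]

/-- The action of the `2 × 2` matrix `!![p, q; r, s]` on the coordinates `i` and `j`, fixing all
other coordinates. -/
def planeMap (i j : ι) (p q r s : R) : (ι → R) →ₗ[R] (ι → R) where
  toFun x k := if k = i then p * x i + q * x j else if k = j then r * x i + s * x j else x k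
  map_add' x y := by
    ext k
    simp only [Pi.add_apply]
    split_ifs <;> ring
  map_smul' c x := by
    ext k
    simp only [Pi.smul_apply, smul_eq_mul, RingHom.id_apply]
    split_ifs <;> ring

lemma planeMap_apply (i j : ι) (p q r s : R) (x : ι → R) (k : ι) : planeMap i j p q r s x k =
    if k = i then p * x i + q * x j else if k = j then r * x i + s * x j else x k :=
  rfl

lemma planeMap_comp_planeMap {i j : ι} (hij : i ≠ j) {p q r s : R} (h : p * s - q * r = 1) :
    planeMap i j p q r s ∘ₗ planeMap i j s (-q) (-r) p = LinearMap.id := by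
  ext1 x
  ext k
  simp only [LinearMap.comp_apply, planeMap_apply, hij.symm, if_true, if_false, LinearMap.id_apply]
  split_ifs with hi hj
  · subst hi; linear_combination x k * h
  · subst hj; linear_combination x k * h
  · rfl

/-- `planeMap` for a matrix of determinant `1`, as an automorphism. -/
def planeEquiv {i j : ι} (hij : i ≠ j) {p q r s : R} (h : p * s - q * r = 1) :
    (ι → R) ≃ₗ[R] (ι → R) :=
  LinearEquiv.ofLinearMap (planeMap i j p q r s) (planeMap i j s (-q) (-r) p)
    (planeMap_comp_planeMap hij h)
    (by simpa using planeMap_comp_planeMap hij (show s * p - -q * -r = 1 by linear_combination h))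

lemma planeEquiv_apply {i j : ι} (hij : i ≠ j) {p q r s : R} (h : p * s - q * r = 1) (x : ι → R)
    (k : ι) : planeEquiv hij h x k =
      if k = i then p * x i + q * x j else if k = j then r * x i + s * x j else x k :=
  rfl

lemma sum_planeEquiv [Fintype ι] {i j : ι} (hij : i ≠ j) {p q r s : R} (h : p * s - q * r = 1)
    (hpr : p + r = 1) (hqs : q + s = 1) (x : ι → R) : ∑ k, planeEquiv hij h x k = ∑ k, x k := by
  refine sum_eq_sum_of_add_eq_add hij ?_ fun k hi hj ↦ ?_
  · simp only [planeEquiv_apply, hij.symm, if_true, if_false]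
    linear_combination x i * hpr + x j * hqs
  · simp only [planeEquiv_apply, hi, hj, if_false]

end PlaneMap

section GcdLcmStep

variable {R ι : Type*} [CommRing R] {α β : ι → R}

/-- `β` arises from `α` by replacing two entries `g * a` and `g * b`, with `a` and `b` coprime, by
their gcd `g` and their lcm `g * a * b`. -/
def GcdLcmStep (α β : ι → R) : Prop :=
  ∃ i j, i ≠ j ∧ ∃ g a b, IsCoprime a b ∧ α i = g * a ∧ α j = g * b ∧
    β i = g ∧ β j = g * a * b ∧ ∀ k, k ≠ i → k ≠ j → α k = β k

lemma GcdLcmStep.cons {n : ℕ} {α β : Fin n → R} (h : GcdLcmStep α β) (c : R) :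
    GcdLcmStep (Fin.cons c α : Fin (n + 1) → R) (Fin.cons c β) := by
  obtain ⟨i, j, hij, g, a, b, hab, hαi, hαj, hβi, hβj, hrest⟩ := h
  refine ⟨i.succ, j.succ, (Fin.succ_injective n).ne hij, g, a, b, hab, hαi, hαj, hβi, hβj, ?_⟩
  refine Fin.cases (fun _ _ ↦ rfl) fun k hi hj ↦ ?_
  exact hrest k (by rintro rfl; exact hi rfl) (by rintro rfl; exact hj rfl)

lemma GcdLcmStep.forall_dvd (h : GcdLcmStep α β) {c : R} (hc : ∀ k, c ∣ α k) (k : ι) :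
    c ∣ β k := by
  obtain ⟨i, j, -, g, a, b, ⟨u, v, huv⟩, hαi, hαj, hβi, hβj, hrest⟩ := h
  have hg : c ∣ g := by
    have hbezout : g = u * (g * a) + v * (g * b) := by linear_combination -g * huv
    rw [hbezout, ← hαi, ← hαj]
    exact ((hc i).mul_left u).add ((hc j).mul_left v)
  by_cases hi : k = i
  · rwa [hi, hβi]
  by_cases hj : k = j
  · rw [hj, hβj, mul_assoc]
    exact hg.mul_right _
  · exact hrest k hi hj ▸ hc k

lemma GcdLcmStep.prod_X_add_C_span [Fintype ι] (h : GcdLcmStep α β) :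
    ∏ i, (X + C (Ideal.span {α i})) = ∏ i, (X + C (Ideal.span {β i})) := by
  obtain ⟨i, j, hij, g, a, b, ⟨u, v, huv⟩, hαi, hαj, hβi, hβj, hrest⟩ := h
  refine prod_eq_prod_of_mul_eq_mul hij ?_ fun k hi hj ↦ by rw [hrest k hi hj]
  have hsum : Ideal.span {g * a} + Ideal.span {g * b} = Ideal.span {g} := by
    rw [Submodule.add_eq_sup, ← Ideal.span_insert]
    refine le_antisymm (Ideal.span_le.2 ?_) ?_
    · rintro x (rfl | rfl)
      exacts [Ideal.mem_span_singleton.2 (dvd_mul_right _ _),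
        Ideal.mem_span_singleton.2 (dvd_mul_right _ _)]
    · rw [Ideal.span_singleton_le_iff_mem, Ideal.mem_span_pair]
      exact ⟨u, v, by linear_combination g * huv⟩
  have habsorb : Ideal.span {g} + Ideal.span {g * a * b} = Ideal.span {g} := by
    rw [Submodule.add_eq_sup, sup_eq_left, Ideal.span_singleton_le_span_singleton, mul_assoc]
    exact dvd_mul_right _ _
  have hmul : Ideal.span {g * a} * Ideal.span {g * b} =
      Ideal.span {g} * Ideal.span {g * a * b} := by
    simp only [Ideal.span_singleton_mul_span_singleton]
    congr 2
    ring
  have hexpand (I J : Ideal R) :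
      (X + C I) * (X + C J) = X ^ 2 + C (I + J) * X + C (I * J) := by
    simp only [map_add, map_mul]
    ring
  rw [hαi, hαj, hβi, hβj, hexpand, hexpand, hsum, habsorb, hmul]

lemma GcdLcmStep.gcd_powersetCard_prod [Fintype ι] [IsDomain R] [IsBezout R]
    [NormalizedGCDMonoid R] (h : GcdLcmStep α β) {k : ℕ} (hk : k ≤ Fintype.card ι) :
    (powersetCard k univ).gcd (fun s ↦ ∏ i ∈ s, α i) =
      (powersetCard k univ).gcd (fun s ↦ ∏ i ∈ s, β i) := by
  have hspan := span_gcd_powersetCard_prod hk α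
  rw [h.prod_X_add_C_span, ← span_gcd_powersetCard_prod hk β,
    Ideal.span_singleton_eq_span_singleton] at hspan
  exact dvd_antisymm_of_normalize_eq normalize_gcd normalize_gcd hspan.dvd hspan.symm.dvd

lemma GcdLcmStep.nonempty_quotient_equiv [Fintype ι] (h : GcdLcmStep α β) :
    Nonempty (((ι → R) ⧸ weightedBoundaries α) ≃ₗ[R] ((ι → R) ⧸ weightedBoundaries β)) := by
  classical
  obtain ⟨i, j, hij, g, a, b, ⟨u, v, huv⟩, hαi, hαj, hβi, hβj, hrest⟩ := h
  -- `!![g, 0; 0, gab] * V = U * !![ga, 0; 0, gb]`, and the columns of `V` sum to `1`.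
  let U : (ι → R) ≃ₗ[R] (ι → R) := planeEquiv hij
    (show u * (a * (1 + v * b)) - -v * (b * (1 - u * a)) = 1 by linear_combination huv)
  let V : (ι → R) ≃ₗ[R] (ι → R) := planeEquiv hij
    (show u * a * (1 + v * b) - -(v * b) * (1 - u * a) = 1 by linear_combination huv)
  refine ⟨Submodule.Quotient.equiv _ _ U (map_weightedBoundaries U V (fun x ↦ ?_)
    (sum_planeEquiv hij _ (by ring) (by ring)))⟩
  ext k
  simp only [U, V, planeEquiv_apply, Pi.mul_apply]
  split_ifs with hi hj
  · rw [hi, hαi, hαj, hβi]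
    ring
  · rw [hj, hαi, hαj, hβj]
    ring
  · rw [hrest k hi hj]

/-- `β` arises from `α` by finitely many gcd-lcm replacements. -/
abbrev GcdLcmReduces (α β : ι → R) : Prop :=
  Relation.ReflTransGen GcdLcmStep α β

lemma GcdLcmReduces.cons {n : ℕ} {α β : Fin n → R} (h : GcdLcmReduces α β) (c : R) :
    GcdLcmReduces (Fin.cons c α : Fin (n + 1) → R) (Fin.cons c β) :=
  Relation.ReflTransGen.lift _ (fun _ _ (hstep : GcdLcmStep _ _) ↦ hstep.cons c) _ _ h

lemma GcdLcmReduces.forall_dvd (h : GcdLcmReduces α β) {c : R} (hc : ∀ k, c ∣ α k) (k : ι) :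
    c ∣ β k := by
  induction h generalizing k with
  | refl => exact hc k
  | tail _ hstep ih => exact hstep.forall_dvd ih k

lemma GcdLcmReduces.gcd_powersetCard_prod [Fintype ι] [IsDomain R] [IsBezout R]
    [NormalizedGCDMonoid R] (h : GcdLcmReduces α β) {k : ℕ} (hk : k ≤ Fintype.card ι) :
    (powersetCard k univ).gcd (fun s ↦ ∏ i ∈ s, α i) =
      (powersetCard k univ).gcd (fun s ↦ ∏ i ∈ s, β i) := by
  induction h with
  | refl => rfl
  | tail _ hstep ih => exact ih.trans (hstep.gcd_powersetCard_prod hk)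

lemma GcdLcmReduces.nonempty_quotient_equiv [Fintype ι] (h : GcdLcmReduces α β) :
    Nonempty (((ι → R) ⧸ weightedBoundaries α) ≃ₗ[R] ((ι → R) ⧸ weightedBoundaries β)) := by
  induction h with
  | refl => exact ⟨LinearEquiv.refl R _⟩
  | tail _ hstep ih => exact ih.elim fun e ↦ hstep.nonempty_quotient_equiv.map e.trans

lemma exists_mul_eq_isCoprime [IsDomain R] [IsBezout R] (x y : R) :
    ∃ g a b, IsCoprime a b ∧ g * a = x ∧ g * b = y := by
  classical
  let := IsBezout.toGCDDomain R
  obtain ⟨a, b, hx, hy, hab⟩ := extract_gcd x y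
  exact ⟨_, a, b, (gcd_isUnit_iff a b).1 hab, hx.symm, hy.symm⟩

lemma exists_gcdLcmReduces_cons_isDvdChain [IsDomain R] [IsBezout R] {n : ℕ} (x : R)
    {β : Fin n → R} (hβ : IsDvdChain β) :
    ∃ γ : Fin (n + 1) → R, GcdLcmReduces (Fin.cons x β) γ ∧ IsDvdChain γ := by
  induction n generalizing x with
  | zero => exact ⟨_, .refl, fun i j _ ↦ by rw [Fin.fin_one_eq_zero i, Fin.fin_one_eq_zero j]⟩
  | succ n ih =>
    obtain ⟨g, a, b, hab, rfl, hb⟩ := exists_mul_eq_isCoprime x (β 0)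
    obtain ⟨γ, hreduces, hγ⟩ := ih (g * a * b) hβ.tail
    have hstep : GcdLcmStep (Fin.cons (g * a) β : Fin (n + 2) → R)
        (Fin.cons g (Fin.cons (g * a * b) (Fin.tail β) : Fin (n + 1) → R)) := by
      refine ⟨0, 1, zero_ne_one, g, a, b, hab, rfl, hb.symm, rfl, rfl, ?_⟩
      refine Fin.cases (fun h _ ↦ absurd rfl h) (Fin.cases (fun _ h ↦ absurd rfl h) ?_)
      exact fun _ _ _ ↦ rfl
    refine ⟨Fin.cons g γ, .head hstep (hreduces.cons g), hγ.cons (hreduces.forall_dvd ?_)⟩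
    refine Fin.cases ((dvd_mul_right g a).mul_right b) fun k ↦ ?_
    exact (Dvd.intro b hb).trans (hβ (Fin.zero_le k.succ))

lemma exists_gcdLcmReduces_isDvdChain [IsDomain R] [IsBezout R] {n : ℕ} (α : Fin n → R) :
    ∃ γ : Fin n → R, GcdLcmReduces α γ ∧ IsDvdChain γ := by
  induction n with
  | zero => exact ⟨α, .refl, fun i ↦ i.elim0⟩
  | succ n ih =>
    obtain ⟨β, hαβ, hβ⟩ := ih (Fin.tail α)
    obtain ⟨γ, hβγ, hγ⟩ := exists_gcdLcmReduces_cons_isDvdChain (α 0) hβ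
    refine ⟨γ, ?_, hγ⟩
    rw [← Fin.cons_self_tail α]
    exact (hαβ.cons (α 0)).trans hβγ

end GcdLcmStep

section QuotientOfDvdChain

variable {R : Type*} [CommRing R] {m : ℕ} {I : Fin m → Ideal R} {γ : Fin (m + 1) → R}
  {c : Fin m → R}

/-- The map `x ↦ ((x i mod I i)_{i < m}, x m + ∑ i < m, c i * x i)`. It induces the splitting of
`H₀` when `I i` is generated by `γ i` and `γ m = γ i * c i` for all `i < m`. -/
def splittingMap (I : Fin m → Ideal R) (c : Fin m → R) :
    (Fin (m + 1) → R) →ₗ[R] ((i : Fin m) → R ⧸ I i) × R :=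
  (LinearMap.pi fun i ↦ (I i).mkQ ∘ₗ LinearMap.proj i.castSucc).prod
    (LinearMap.proj (Fin.last m) + ∑ i, c i • LinearMap.proj i.castSucc)

lemma splittingMap_apply (x : Fin (m + 1) → R) : splittingMap I c x =
    (fun i ↦ Ideal.Quotient.mk (I i) (x i.castSucc),
      x (Fin.last m) + ∑ i, c i * x i.castSucc) := by
  ext <;> simp [splittingMap]

lemma splittingMap_surjective : Function.Surjective (splittingMap I c) := by
  rintro ⟨p, t⟩
  choose q hq using fun i ↦ Ideal.Quotient.mk_surjective (p i)
  refine ⟨Fin.snoc q (t - ∑ i, c i * q i), ?_⟩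
  rw [splittingMap_apply]
  simp only [Fin.snoc_castSucc, Fin.snoc_last, hq, sub_add_cancel]

lemma ker_splittingMap (hc : ∀ i, γ (Fin.last m) = γ i.castSucc * c i) :
    LinearMap.ker (splittingMap (fun i ↦ Ideal.span {γ i.castSucc}) c) = weightedBoundaries γ := by
  have hmul (y : Fin m → R) :
      ∑ i, c i * (γ i.castSucc * y i) = γ (Fin.last m) * ∑ i, y i := by
    rw [mul_sum]
    exact sum_congr rfl fun i _ ↦ by rw [hc i]; ring
  ext x
  simp only [LinearMap.mem_ker, splittingMap_apply, Prod.mk_eq_zero, funext_iff, Pi.zero_apply,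
    Ideal.Quotient.eq_zero_iff_dvd, mem_weightedBoundaries]
  constructor
  · rintro ⟨hdvd, hlast⟩
    choose y hy using hdvd
    refine ⟨Fin.snoc y (-∑ i, y i), by simp [Fin.sum_univ_castSucc], ?_⟩
    refine Fin.lastCases ?_ fun i ↦ ?_
    · simp only [hy, hmul] at hlast
      simp only [Pi.mul_apply, Fin.snoc_last]
      linear_combination -hlast
    · simp only [Pi.mul_apply, Fin.snoc_castSucc, hy]
  · rintro ⟨y, hy, hx⟩
    rw [Fin.sum_univ_castSucc] at hy
    simp only [← hx, Pi.mul_apply, dvd_mul_right, implies_true, hmul, true_and]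
    linear_combination γ (Fin.last m) * hy

lemma IsDvdChain.nonempty_quotient_equiv (hγ : IsDvdChain γ) :
    Nonempty (((Fin (m + 1) → R) ⧸ weightedBoundaries γ) ≃ₗ[R]
      ((i : Fin m) → R ⧸ Ideal.span {γ i.castSucc}) × R) := by
  choose c hc using fun i : Fin m ↦ hγ (Fin.le_last i.castSucc)
  exact ⟨(Submodule.quotEquivOfEq _ _ (ker_splittingMap hc).symm).trans
    ((splittingMap _ c).quotKerEquivOfSurjective splittingMap_surjective)⟩

end QuotientOfDvdChain

theorem exists_quotient_weightedBoundaries_equiv {R : Type*} [CommRing R] [IsDomain R]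
    [IsBezout R] [StrongNormalizedGCDMonoid R] {m : ℕ} (α : Fin (m + 1) → R) :
    ∃ d : Fin m → R,
      (∀ (k : ℕ) (hk : k ≤ m), ∏ i : Fin k, d (i.castLE hk) =
        (powersetCard k univ).gcd (fun s ↦ ∏ i ∈ s, α i)) ∧
      Nonempty (((Fin (m + 1) → R) ⧸ weightedBoundaries α) ≃ₗ[R]
        ((i : Fin m) → R ⧸ Ideal.span {d i}) × R) := by
  obtain ⟨γ, hreduces, hγ⟩ := exists_gcdLcmReduces_isDvdChain α
  refine ⟨fun i ↦ normalize (γ i.castSucc), fun k hk ↦ ?_, ?_⟩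
  · have hk' : k ≤ m + 1 := hk.trans m.le_succ
    rw [hreduces.gcd_powersetCard_prod (by rwa [Fintype.card_fin]), hγ.gcd_powersetCard_prod hk']
    exact (map_prod normalizeHom _ _).symm
  · obtain ⟨e⟩ := hreduces.nonempty_quotient_equiv
    obtain ⟨e'⟩ := hγ.nonempty_quotient_equiv
    have hspan (i : Fin m) :
        Ideal.span {γ i.castSucc} = Ideal.span {normalize (γ i.castSucc)} :=
      Ideal.span_singleton_eq_span_singleton.2 (associated_normalize _)
    exact ⟨e.trans (e'.trans ((LinearEquiv.piCongrRight fun i ↦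
      (Ideal.quotientEquivAlgOfEq R (hspan i)).toLinearEquiv).prodCongr (.refl R R)))⟩

section CycleBoundary

variable (R : Type*) [CommRing R] (n : ℕ) [NeZero n]

/-- The boundary matrix of the unweighted cycle on `n` vertices, oriented cyclically: column `e` is
`[v_{e+1}] - [v_e]`. -/
def cycleBoundary : Matrix (Fin n) (Fin n) R :=
  Matrix.circulant (Pi.single 1 1 - Pi.single 0 1)

variable {R n}

lemma cycleBoundary_apply (v e : Fin n) :
    cycleBoundary R n v e = (if v = e + 1 then 1 else 0) - if v = e then 1 else 0 := by
  simp only [cycleBoundary, Matrix.circulant_apply, Pi.sub_apply, Pi.single_apply,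
    sub_eq_iff_eq_add' (b := e), add_zero]

lemma cycleBoundary_mulVec_apply (x : Fin n → R) (v : Fin n) :
    (cycleBoundary R n).mulVec x v = x (v - 1) - x v := by
  simp [Matrix.mulVec, dotProduct, cycleBoundary_apply, sub_mul, ← sub_eq_iff_eq_add]

lemma det_cycleBoundary [IsDomain R] : (cycleBoundary R n).det = 0 :=
  Matrix.exists_mulVec_eq_zero_iff.1 ⟨1, one_ne_zero, by
    ext v
    simp only [cycleBoundary_mulVec_apply, Pi.one_apply, sub_self, Pi.zero_apply]⟩

lemma range_cycleBoundary : LinearMap.range (cycleBoundary R n).mulVecLin = sumZero R (Fin n) := by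
  obtain ⟨m, rfl⟩ := Nat.exists_eq_succ_of_ne_zero (NeZero.ne n)
  ext y
  rw [LinearMap.mem_range, mem_sumZero]
  constructor
  · rintro ⟨x, rfl⟩
    simp only [Matrix.mulVecLin_apply, cycleBoundary_mulVec_apply, sum_sub_distrib, sub_eq_zero]
    exact (Equiv.subRight (1 : Fin (m + 1))).sum_comp x
  · intro hy
    refine ⟨fun v ↦ -∑ w ∈ Iic v, y w, ?_⟩
    ext v
    rw [Matrix.mulVecLin_apply, cycleBoundary_mulVec_apply]
    cases v using Fin.cases with
    | zero =>
      have hpred : (0 : Fin (m + 1)) - 1 = Fin.last m := by rw [sub_eq_iff_eq_add]; simp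
      have hIic : Iic (Fin.last m) = univ := Iic_top
      have hIic_zero : Iic (0 : Fin (m + 1)) = {0} := Iic_bot
      rw [hpred, hIic, hy, hIic_zero, sum_singleton]
      ring
    | succ i =>
      have hpred : i.succ - 1 = i.castSucc := by rw [sub_eq_iff_eq_add]; simp
      have hIic : Iic i.succ = insert i.succ (Iic i.castSucc) := by
        ext j
        simp only [mem_Iic, mem_insert, Fin.le_def, Fin.ext_iff, Fin.val_succ, Fin.val_castSucc]
        omega
      rw [hpred, hIic, sum_insert (by simp [Fin.le_def])]
      ring

lemma range_diagonal_mul_cycleBoundary (α : Fin n → R) :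
    LinearMap.range (Matrix.diagonal α * cycleBoundary R n).mulVecLin = weightedBoundaries α := by
  have hdiagonal : (Matrix.diagonal α).mulVecLin = LinearMap.mulLeft R α := by
    refine LinearMap.ext fun x ↦ funext fun v ↦ ?_
    simp only [Matrix.mulVecLin_apply, Matrix.mulVec_diagonal, LinearMap.mulLeft_apply,
      Pi.mul_apply]
  rw [Matrix.mulVecLin_mul, LinearMap.range_comp, range_cycleBoundary, hdiagonal,
    weightedBoundaries]

lemma det_submatrix_cycleBoundary_of_strictMono {k : ℕ} {p : Fin k → Fin n} (hp : StrictMono p)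
    (h0 : ∀ i, p i ≠ 0) : ((cycleBoundary R n).submatrix p p).det = (-1) ^ k := by
  obtain ⟨m, rfl⟩ := Nat.exists_eq_succ_of_ne_zero (NeZero.ne n)
  have hsucc {i j : Fin k} (hij : i ≤ j) : p i ≠ p j + 1 := fun h ↦ by
    have hle : (p i : ℕ) ≤ p j := hp.monotone hij
    have hval := congrArg Fin.val h
    rw [Fin.val_add_one] at hval
    split_ifs at hval with hlast
    · exact h0 i (Fin.ext hval)
    · omega
  have hlower : ((cycleBoundary R (m + 1)).submatrix p p).IsLowerTriangular := fun i j hij ↦ by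
    have hij : i < j := hij
    simp [cycleBoundary_apply, hsucc hij.le, (hp hij).ne]
  rw [Matrix.det_of_isLowerTriangular _ hlower]
  simp [cycleBoundary_apply, hsucc le_rfl]

lemma exists_isUnit_det_submatrix_cycleBoundary {k : ℕ} (hk : k < n) (s : Finset (Fin n))
    (hs : #s = k) : ∃ p q : Fin k ↪ Fin n, univ.map p = s ∧
      IsUnit ((cycleBoundary R n).submatrix p q).det := by
  obtain ⟨r, hr⟩ : ∃ r, r ∉ s := by
    by_contra! h
    rw [eq_univ_of_forall h, card_univ, Fintype.card_fin] at hs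
    exact hk.ne' hs
  let rotate : Fin n ↪ Fin n := (Equiv.addRight r).toEmbedding
  let t : Finset (Fin n) := s.map (Equiv.subRight r).toEmbedding
  have ht : #t = k := (card_map _).trans hs
  let f := t.orderEmbOfFin ht
  have hf (i : Fin k) : f i ≠ 0 := fun hi ↦ by
    have hmem : f i ∈ t := t.orderEmbOfFin_mem ht i
    rw [hi] at hmem
    obtain ⟨a, ha, har⟩ := mem_map.1 hmem
    exact hr (sub_eq_zero.1 har ▸ ha)
  have hrotate : (cycleBoundary R n).submatrix rotate rotate = cycleBoundary R n := by
    ext v e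
    simp [rotate, cycleBoundary]
  refine ⟨f.toEmbedding.trans rotate, f.toEmbedding.trans rotate, ?_, ?_⟩
  · rw [← map_map, map_orderEmbOfFin_univ, map_map]
    ext a
    simp [rotate]
  · have hdet := det_submatrix_cycleBoundary_of_strictMono (R := R) f.strictMono hf
    rw [← hrotate, Matrix.submatrix_submatrix] at hdet
    exact hdet ▸ isUnit_one.neg.pow k

lemma eq_diagonal_mul_cycleBoundary (hn : 2 ≤ n) {α : Fin n → R} {M : Matrix (Fin n) (Fin n) R}
    (hM : ∀ v e : Fin n,
      M v e = if v = e then -α e else if v.1 = (e.1 + 1) % n then α v else 0) :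
    M = Matrix.diagonal α * cycleBoundary R n := by
  ext v e
  have hone : (1 : Fin n) ≠ 0 := by
    rw [Ne, Fin.one_eq_zero_iff]
    omega
  have hsucc : v.1 = (e.1 + 1) % n ↔ v = e + 1 := by
    rw [Fin.ext_iff, Fin.val_add, Fin.val_one', Nat.add_mod_mod]
  rw [hM, Matrix.diagonal_mul, cycleBoundary_apply]
  by_cases hve : v = e
  · simp [hve, hone]
  · simp [hve, hsucc]

end CycleBoundary

theorem stmt18_general {R : Type*} [CommRing R] [IsDomain R] [IsBezout R]
    [StrongNormalizedGCDMonoid R] (n : ℕ) (hn : 2 ≤ n) (α : Fin n → R)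
    (M : Matrix (Fin n) (Fin n) R)
    (hM : ∀ v e, M v e = if v = e then -α e else if v.1 = (e.1 + 1) % n then α v else 0) :
    M.det = 0 ∧
    (∀ k : ℕ, 1 ≤ k → k ≤ n - 1 →
      univ.gcd (fun p : (Fin k ↪ Fin n) × (Fin k ↪ Fin n) ↦ (M.submatrix p.1 p.2).det)
        = (powersetCard k (univ : Finset (Fin n))).gcd (fun s ↦ ∏ i ∈ s, α i)) ∧
    ∃ d : ℕ → R,
      (∀ k : ℕ, 1 ≤ k → k ≤ n - 1 →
        ∏ j ∈ Icc 1 k, d j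
          = (powersetCard k (univ : Finset (Fin n))).gcd (fun s ↦ ∏ i ∈ s, α i)) ∧
      d n = 0 ∧
      Nonempty
        (((Fin n → R) ⧸ LinearMap.range (Matrix.mulVecLin M)) ≃ₗ[R]
          (((i : Fin (n - 1)) → R ⧸ (Ideal.span {d (i.1 + 1)} : Ideal R)) × R)) := by
  obtain ⟨m, rfl⟩ : ∃ m, n = m + 1 := ⟨n - 1, by omega⟩
  obtain rfl := eq_diagonal_mul_cycleBoundary hn hM
  refine ⟨by rw [Matrix.det_mul, det_cycleBoundary, mul_zero], fun k _ hk ↦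
    gcd_minors_diagonal_mul α _ (exists_isUnit_det_submatrix_cycleBoundary (by omega)), ?_⟩
  obtain ⟨d, hgcd, hequiv⟩ := exists_quotient_weightedBoundaries_equiv α
  obtain ⟨d, rfl, hd⟩ : ∃ d' : ℕ → R, (fun i : Fin m ↦ d' (i + 1)) = d ∧ d' (m + 1) = 0 :=
    ⟨fun j ↦ if h : j - 1 < m then d ⟨j - 1, h⟩ else 0, by ext i; simp, by simp⟩
  refine ⟨d, fun k _ hk ↦ ?_, hd, ?_⟩
  · rw [← hgcd k hk, ← Ico_add_one_right_eq_Icc, prod_Ico_eq_prod_range, prod_range]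
    exact prod_congr rfl fun i _ ↦ congrArg d (add_comm _ _)
  · rw [range_diagonal_mul_cycleBoundary]
    exact hequiv

/-- for the `n`-gon with angle weights `α_0,...,α_{n-1} ∈ ℤ`, the matrix
`[∂_1]` of the φ-weighted boundary map (column `e` for edge `[v_e, v_{e+1}]`, indices
mod `n`, with entry `−α_e` in row `v_e` and `α_{e+1}` in row `v_{e+1}`) has
determinant `0`; for `1 ≤ k ≤ n−1` the gcd of the determinants of its `k×k` minors
equals `gcd{α_{i_1}···α_{i_k} : i_1 < ⋯ < i_k}`; and consequently
`H_0(K,φ;ℤ) = ℤⁿ/im ∂_1 ≅ ℤ/d_1 ⊕ ⋯ ⊕ ℤ/d_{n-1} ⊕ ℤ` where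
`d_1⋯d_k = gcd{α_{i_1}···α_{i_k}}` for `1 ≤ k ≤ n−1` and `d_n = 0`. -/
theorem stmt18 (n : ℕ) (hn : 3 ≤ n) (α : Fin n → ℤ)
    (M : Matrix (Fin n) (Fin n) ℤ)
    (hM : ∀ v e : Fin n, M v e = if v = e then -α e else if v.1 = (e.1 + 1) % n then α v else 0) :
    M.det = 0 ∧
    (∀ k : ℕ, 1 ≤ k → k ≤ n - 1 →
      Finset.gcd Finset.univ
          (fun p : (Fin k ↪ Fin n) × (Fin k ↪ Fin n) => (M.submatrix p.1 p.2).det)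
        = Finset.gcd (Finset.powersetCard k (Finset.univ : Finset (Fin n)))
            (fun s => ∏ i ∈ s, α i)) ∧
    ∃ d : ℕ → ℤ,
      (∀ k : ℕ, 1 ≤ k → k ≤ n - 1 →
        ∏ j ∈ Finset.Icc 1 k, d j
          = Finset.gcd (Finset.powersetCard k (Finset.univ : Finset (Fin n)))
              (fun s => ∏ i ∈ s, α i)) ∧
      d n = 0 ∧
      Nonempty
        (((Fin n → ℤ) ⧸ LinearMap.range (Matrix.mulVecLin M)) ≃ₗ[ℤ]
          (((i : Fin (n - 1)) → ℤ ⧸ (Ideal.span {d (i.1 + 1)} : Ideal ℤ)) × ℤ)) :=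
  stmt18_general n (by omega) α M hM
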